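/- arXiv:2402.02256 — 3 statements merged into one kernel-verified Lean document; each statement's English description precedes it below -/
import Mathlib

section
/- Let $G$ be an $(n,d,\lambda)$-graph (a $d$-regular graph on $n$ vertices whose adjacency matrix eigenvalues $\lambda_1 \ge \dots \ge \lambda_n$ satisfy $\max\{\lambda_2, -\lambda_n\} \le \lambda$) with $\lambda < d^{3/4}/100$ and $d < n/10$. Then $G$ contains an induced path of length $n/(32d)$, i.e., a sequence of $\lfloor n/(32d) \rfloor + 1$ distinct vertices in which consecutive vertices are adjacent in $G$ and non-consecutive vertices are non-adjacent in $G$. -/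
/-!
The path is found by a depth-first search that keeps the stack induced. The search maintains a
set `S` of discarded vertices and an induced path `P` disjoint from `S`, subject to one invariant:
every vertex outside `S ∪ P` with a neighbour in `S` has a neighbour in `P`. If some unvisited
vertex is adjacent to the end of `P` and to no other vertex of `P`, it is pushed; otherwise the end
of `P` is moved to `S`, and precisely because nothing could be pushed the invariant survives
(`InducedSearch.step`).

If no induced path has `⌊n / (32 d)⌋ + 1` vertices, then `P` always stays so short that
`P ∪ N(P)` has at most `n / 16` vertices, and the search continues until `S` has
`⌊n / 2⌋` vertices (`InducedSearch.exists_of_bounded`). At that moment the set `W` of vertices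
outside `S ∪ P ∪ N(P)` has at least `n / 4` vertices and spans no edge with `S`. The case
`e(S, W) = 0` of the expander mixing lemma (`mixing_of_no_edges`) gives
`d² |S| |W| ≤ λ² n²`, hence `d ≤ 4 λ`, which is incompatible with `λ < d ^ (3/4) / 100`.
-/

/-- `G` contains an induced path with vertex sequence `p : Fin (L+1) → V`:
the vertices are distinct, consecutive vertices are adjacent, and
non-consecutive vertices are non-adjacent. -/
def IsInducedPathSeq {V : Type*} (G : SimpleGraph V) {L : ℕ} (p : Fin (L + 1) → V) : Prop :=
  Function.Injective p ∧
    (∀ i j : Fin (L + 1), (i : ℕ) + 1 = (j : ℕ) → G.Adj (p i) (p j)) ∧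
    (∀ i j : Fin (L + 1), (i : ℕ) + 1 < (j : ℕ) → ¬ G.Adj (p i) (p j))

/-- State of the induced depth-first search: `p 0, …, p (m - 1)` is an induced path (values of `p`
from `m` on are irrelevant), `S` is the set of discarded vertices, disjoint from the path, and
every unvisited vertex with a neighbour in `S` has a neighbour on the path. -/
structure InducedSearch {V : Type*} (G : SimpleGraph V) (m : ℕ) (p : ℕ → V) (S : Finset V) :
    Prop where
  inj : ∀ i j, i < j → j < m → p i ≠ p j
  adj : ∀ i, i + 1 < m → G.Adj (p i) (p (i + 1))
  nonadj : ∀ i j, i + 1 < j → j < m → ¬ G.Adj (p i) (p j)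
  disj : ∀ i, i < m → p i ∉ S
  inv : ∀ u, u ∉ S → (∀ i, i < m → u ≠ p i) → (∃ s ∈ S, G.Adj s u) → ∃ i, i < m ∧ G.Adj (p i) u

/-- As long as not every vertex is discarded, the search can either push a vertex onto the path or
discard one more vertex. -/
lemma InducedSearch.step {V : Type*} [Fintype V] [DecidableEq V] {G : SimpleGraph V} {m : ℕ}
    {p : ℕ → V} {S : Finset V} (h : InducedSearch G m p S) (hS : S.card < Fintype.card V) :
    (∃ p', InducedSearch G (m + 1) p' S) ∨
      ∃ m' p' S', S'.card = S.card + 1 ∧ InducedSearch G m' p' S' := by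
  obtain _ | t := m
  · left
    obtain ⟨u, hu⟩ : ∃ u, u ∉ S := by
      by_contra! hall
      exact hS.ne (by rw [Finset.eq_univ_iff_forall.2 hall, Finset.card_univ])
    refine ⟨fun _ => u, ⟨by omega, by omega, by omega, fun _ _ => hu, ?_⟩⟩
    intro w hw _ hs
    obtain ⟨i, hi, _⟩ := h.inv w hw (by omega) hs
    omega
  by_cases hex : ∃ u, u ∉ S ∧ (∀ i, i < t + 1 → u ≠ p i) ∧ G.Adj (p t) u ∧
      ∀ i, i < t → ¬ G.Adj (p i) u
  · left
    obtain ⟨u, huS, hup, hut, hun⟩ := hex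
    have hlt : ∀ i, i < t + 1 → Function.update p (t + 1) u i = p i := fun i hi =>
      Function.update_of_ne hi.ne _ _
    have heq : Function.update p (t + 1) u (t + 1) = u := Function.update_self _ _ _
    refine ⟨Function.update p (t + 1) u, ⟨?_, ?_, ?_, ?_, ?_⟩⟩
    · intro i j hij hj
      rw [hlt i (by omega)]
      obtain rfl | hj' := eq_or_ne j (t + 1)
      · rw [heq]; exact (hup i hij).symm
      · rw [hlt j (by omega)]; exact h.inj i j hij (by omega)
    · intro i hi
      rw [hlt i (by omega)]
      obtain rfl | hj' := eq_or_ne i t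
      · rw [heq]; exact hut
      · rw [hlt _ (by omega)]; exact h.adj i (by omega)
    · intro i j hij hj
      rw [hlt i (by omega)]
      obtain rfl | hj' := eq_or_ne j (t + 1)
      · rw [heq]; exact hun i (by omega)
      · rw [hlt j (by omega)]; exact h.nonadj i j hij (by omega)
    · intro i hi
      obtain rfl | hj' := eq_or_ne i (t + 1)
      · rw [heq]; exact huS
      · rw [hlt i (by omega)]; exact h.disj i (by omega)
    · intro w hw hwp hs
      obtain ⟨i, hi, hadj⟩ := h.inv w hw
        (fun i hi => by have := hwp i (by omega); rwa [hlt i hi] at this) hs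
      exact ⟨i, by omega, by rwa [hlt i hi]⟩
  · right
    refine ⟨t, p, insert (p t) S, Finset.card_insert_of_notMem (h.disj t (by omega)),
      ⟨fun i j hij hj => h.inj i j hij (by omega), fun i hi => h.adj i (by omega),
       fun i j hij hj => h.nonadj i j hij (by omega), ?_, ?_⟩⟩
    · intro i hi hmem
      rcases Finset.mem_insert.1 hmem with he | he
      · exact h.inj i t hi (by omega) he
      · exact h.disj i (by omega) he
    · rintro w hw hwp ⟨s, hs, hsw⟩
      rw [Finset.mem_insert, not_or] at hw
      have hwp' : ∀ i, i < t + 1 → w ≠ p i := by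
        intro i hi
        obtain rfl | hne := eq_or_ne i t
        · exact hw.1
        · exact hwp i (by omega)
      -- `w` has a neighbour on the old path; were `p t` the only one, `w` could have been pushed.
      have key : ∃ i, i < t + 1 ∧ G.Adj (p i) w := by
        rcases Finset.mem_insert.1 hs with rfl | hs
        · exact ⟨t, by omega, hsw⟩
        · exact h.inv w hw.2 hwp' ⟨s, hs, hsw⟩
      by_contra! hno
      obtain ⟨i, hi, hadj⟩ := key
      obtain rfl | hne := eq_or_ne i t
      · exact hex ⟨w, hw.2, hwp', hadj, hno⟩
      · exact hno i (by omega) hadj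

/-- If the path never reaches `L + 1` vertices, the search attains every size of the discarded
set. -/
lemma InducedSearch.exists_of_bounded {V : Type*} [Fintype V] [DecidableEq V] [Nonempty V]
    {G : SimpleGraph V} {L : ℕ} (hL : ∀ m p S, InducedSearch G m p S → m ≤ L)
    (k : ℕ) (hk : k ≤ Fintype.card V) :
    ∃ m p S, S.card = k ∧ InducedSearch G m p S := by
  induction k with
  | zero =>
    exact ⟨0, fun _ => Classical.arbitrary V, ∅, rfl, by omega, by omega, by omega, by omega,
      by simp⟩
  | succ k ih =>
    obtain ⟨m, p, S, hS, h⟩ := ih (by omega)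
    by_contra hno
    have grow : ∀ r, ∃ p', InducedSearch G (m + r) p' S := by
      intro r
      induction r with
      | zero => exact ⟨p, h⟩
      | succ r ihr =>
        obtain ⟨q, hq⟩ := ihr
        rcases hq.step (by omega) with hp | ⟨m', p', S', hc, h'⟩
        · exact hp
        · exact absurd ⟨m', p', S', by omega, h'⟩ hno
    obtain ⟨q, hq⟩ := grow (L + 1)
    have := hL _ _ _ hq
    omega

/-- Coordinates in an orthonormal eigenbasis of a real symmetric matrix: Parseval's identity, and
the matrix acts diagonally. -/
lemma exists_eigencoords {V : Type*} [Fintype V] [DecidableEq V] {A : Matrix V V ℝ}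
    (hA : A.IsHermitian) :
    ∃ c : (V → ℝ) → V → ℝ, (∀ x y, ∑ i, c x i * c y i = x ⬝ᵥ y) ∧
      (∀ x i, c (A.mulVec x) i = hA.eigenvalues i * c x i) ∧
      (∀ (r : ℝ) x i, c (r • x) i = r * c x i) := by
  refine ⟨fun x i => x ⬝ᵥ (hA.eigenvectorBasis i : V → ℝ), ?_, ?_, ?_⟩
  · intro x y
    have := hA.eigenvectorBasis.sum_inner_mul_inner (WithLp.toLp 2 x) (WithLp.toLp 2 y)
    simp only [EuclideanSpace.inner_eq_star_dotProduct, star_trivial] at this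
    rw [dotProduct_comm x y, ← this]
    refine Finset.sum_congr rfl fun i _ => ?_
    beta_reduce
    rw [dotProduct_comm x]
  · intro x i
    have hT : A.transpose = A := by simpa using hA.eq
    have := hA.mulVec_eigenvectorBasis i
    beta_reduce
    rw [dotProduct_comm, Matrix.dotProduct_mulVec, ← Matrix.mulVec_transpose, hT, this,
      smul_dotProduct, dotProduct_comm, smul_eq_mul]
  · intro r x i
    simp

/-- Expander mixing lemma for two vertex sets with no edges between them. All eigenvalues except
the one at `i₀` are at most `lam < d` in absolute value, so the eigenvalue at `i₀` must be `d`,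
with the constant vector as eigenvector. -/
lemma mixing_of_no_edges {V : Type*} [Fintype V] [DecidableEq V] [Nonempty V] {G : SimpleGraph V}
    [DecidableRel G.Adj] {d : ℕ} {lam : ℝ} (hreg : G.IsRegularOfDegree d)
    (hA : (SimpleGraph.adjMatrix ℝ G).IsHermitian) (i₀ : V)
    (hspec : ∀ i, i ≠ i₀ → |hA.eigenvalues i| ≤ lam) (hlam : lam < d)
    (S W : Finset V) (hSW : ∀ s ∈ S, ∀ w ∈ W, ¬ G.Adj s w) :
    ((d : ℝ) * (S.card * W.card)) ^ 2 ≤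
      (Fintype.card V : ℝ) ^ 2 * (lam ^ 2 * (S.card * W.card)) := by
  obtain ⟨c, hP, hAc, hsm⟩ := exists_eigencoords hA
  set o : V → ℝ := fun _ => 1 with ho
  set x : V → ℝ := fun v => if v ∈ S then 1 else 0 with hx
  set y : V → ℝ := fun v => if v ∈ W then 1 else 0 with hy
  have hAo : (SimpleGraph.adjMatrix ℝ G).mulVec o = (d : ℝ) • o := by
    ext v
    simp [ho, SimpleGraph.adjMatrix_mulVec_apply, hreg v]
  have hco : ∀ i, hA.eigenvalues i * c o i = d * c o i := fun i => by
    rw [← hAc, hAo, hsm]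
  have hco0 : ∀ i, i ≠ i₀ → c o i = 0 := by
    intro i hi
    have h1 := hco i
    have h2 := (le_abs_self _).trans (hspec i hi)
    have h3 : (hA.eigenvalues i - d) * c o i = 0 := by linarith
    rcases mul_eq_zero.1 h3 with h | h
    · linarith
    · exact h
  have hsum : ∀ z, z ⬝ᵥ o = c z i₀ * c o i₀ := by
    intro z
    rw [← hP]
    exact Finset.sum_eq_single i₀ (fun i _ hi => by simp [hco0 i hi]) (by simp)
  have hoo : c o i₀ * c o i₀ = Fintype.card V := by
    rw [← hsum]; simp [ho, dotProduct]
  have hN : (0 : ℝ) < Fintype.card V := by exact_mod_cast Fintype.card_pos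
  have hne : c o i₀ ≠ 0 := by
    intro h; rw [h] at hoo; linarith
  have he0 : hA.eigenvalues i₀ = d := mul_right_cancel₀ hne (hco i₀)
  have hxo : c x i₀ * c o i₀ = S.card := by
    rw [← hsum]; simp [ho, hx, dotProduct]
  have hyo : c y i₀ * c o i₀ = W.card := by
    rw [← hsum]; simp [ho, hy, dotProduct]
  have hxx : ∑ i, c x i ^ 2 = S.card := by
    have := hP x x
    simp only [pow_two]
    rw [this]; simp [hx, dotProduct]
  have hyy : ∑ i, c y i ^ 2 = W.card := by
    have := hP y y
    simp only [pow_two]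
    rw [this]; simp [hy, dotProduct]
  have h0 : x ⬝ᵥ (SimpleGraph.adjMatrix ℝ G).mulVec y = 0 := by
    refine Finset.sum_eq_zero fun s _ => ?_
    by_cases hs : s ∈ S
    · rw [SimpleGraph.adjMatrix_mulVec_apply, Finset.sum_eq_zero, mul_zero]
      intro w hw
      have : w ∉ W := fun hwW => hSW s hs w hwW (by simpa using hw)
      simp [hy, this]
    · simp [hx, hs]
  rw [← hP] at h0
  simp only [hAc] at h0
  rw [← Finset.add_sum_erase _ _ (Finset.mem_univ i₀), he0] at h0
  set R := ∑ i ∈ Finset.univ.erase i₀, c x i * (hA.eigenvalues i * c y i) with hR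
  have hR2 : R ^ 2 ≤ lam ^ 2 * (S.card * W.card) := by
    have h1 : R ^ 2 ≤ (∑ i ∈ Finset.univ.erase i₀, c x i ^ 2) *
        ∑ i ∈ Finset.univ.erase i₀, (hA.eigenvalues i * c y i) ^ 2 :=
      Finset.sum_mul_sq_le_sq_mul_sq _ _ _
    have h2 : ∑ i ∈ Finset.univ.erase i₀, c x i ^ 2 ≤ S.card := by
      rw [← hxx]
      exact Finset.sum_le_sum_of_subset_of_nonneg (Finset.erase_subset _ _)
        fun _ _ _ => sq_nonneg _
    have h3 : ∑ i ∈ Finset.univ.erase i₀, (hA.eigenvalues i * c y i) ^ 2 ≤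
        lam ^ 2 * W.card := by
      rw [← hyy, Finset.mul_sum]
      refine (Finset.sum_le_sum fun i hi => ?_).trans
        (Finset.sum_le_sum_of_subset_of_nonneg (Finset.erase_subset i₀ _)
          fun _ _ _ => by positivity)
      rw [mul_pow, ← sq_abs (hA.eigenvalues i)]
      have := hspec i (Finset.ne_of_mem_erase hi)
      gcongr
    calc R ^ 2 ≤ _ := h1
      _ ≤ (S.card : ℝ) * (lam ^ 2 * W.card) := by
        refine mul_le_mul h2 h3 (Finset.sum_nonneg fun _ _ => sq_nonneg _) (by positivity)
      _ = _ := by ring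
  have hkey : (d : ℝ) * (S.card * W.card) = -(Fintype.card V * R) := by
    rw [← hxo, ← hyo, ← hoo]
    linear_combination (c o i₀ * c o i₀) * h0
  calc ((d : ℝ) * (S.card * W.card)) ^ 2 = (Fintype.card V : ℝ) ^ 2 * R ^ 2 := by
        rw [hkey]; ring
    _ ≤ _ := by gcongr

/-- **Long induced paths in expanders.**
Let `G` be an `(n,d,λ)`-graph, i.e. a `d`-regular graph on `n` vertices whose adjacency
matrix eigenvalues `λ₁ ≥ ⋯ ≥ λₙ` (listed in some non-increasing order via `e : Fin n ≃ V`)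
satisfy `max {λ₂, -λₙ} ≤ λ` (equivalently, `|λᵢ| ≤ λ` for all `i ≠ 1`).
If `λ < d^(3/4)/100` and `d < n/10`, then `G` contains an induced path of length
`n/(32d)`, i.e. a sequence of `⌊n/(32d)⌋ + 1` distinct vertices in which consecutive
vertices are adjacent and non-consecutive vertices are non-adjacent. -/
theorem long_induced_path_in_expander
    {V : Type*} [Fintype V] [DecidableEq V] (G : SimpleGraph V) [DecidableRel G.Adj]
    (n d : ℕ) (lam : ℝ)
    (hn : Fintype.card V = n)
    (hreg : G.IsRegularOfDegree d)
    (hA : (SimpleGraph.adjMatrix ℝ G).IsHermitian)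
    (hspec : ∃ e : Fin n ≃ V,
      (Antitone fun i : Fin n => hA.eigenvalues (e i)) ∧
      ∀ i : Fin n, (i : ℕ) ≠ 0 → |hA.eigenvalues (e i)| ≤ lam)
    (hlam : lam < (d : ℝ) ^ ((3 : ℝ) / 4) / 100)
    (hd : (d : ℝ) < (n : ℝ) / 10) :
    ∃ p : Fin (n / (32 * d) + 1) → V, IsInducedPathSeq G p := by
  obtain ⟨e, -, hspec⟩ := hspec
  have hnpos : 0 < n := by
    have : (0 : ℝ) < n := by have : (0 : ℝ) ≤ d := d.cast_nonneg
                             linarith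
    exact_mod_cast this
  have hV : Nonempty V := Fintype.card_pos_iff.1 (by omega)
  obtain rfl | hdpos := Nat.eq_zero_or_pos d
  -- For `d = 0` the required length is the junk value `n / 0 = 0`.
  · have hL : n / (32 * 0) = 0 := by simp
    rw [hL]
    exact ⟨fun _ => hV.some, fun i j _ => Fin.ext (by omega), by intro i j; omega,
      by intro i j; omega⟩
  by_contra hno
  have hbd : ∀ m p S, InducedSearch G m p S → m ≤ n / (32 * d) := by
    intro m p S h
    by_contra! hm
    refine hno ⟨fun i => p i, ?_, ?_, ?_⟩
    · intro i j hij
      by_contra hne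
      rcases lt_or_gt_of_ne hne with hlt | hlt
      · exact h.inj i j hlt (by omega) hij
      · exact h.inj j i hlt (by omega) hij.symm
    · intro i j hij
      have := h.adj i (by omega)
      rwa [hij] at this
    · intro i j hij
      exact h.nonadj i j hij (by omega)
  obtain ⟨m, p, S, hS, h⟩ := InducedSearch.exists_of_bounded hbd (n / 2) (by omega)
  have hm : m * (32 * d) ≤ n :=
    (Nat.mul_le_mul_right _ (hbd _ _ _ h)).trans (Nat.div_mul_le_self _ _)
  set B : Finset V := (Finset.range m).biUnion fun i => insert (p i) (G.neighborFinset (p i))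
    with hB
  have hBcard : B.card ≤ m * (d + 1) := by
    refine (Finset.card_biUnion_le_card_mul _ _ (d + 1) fun i _ => ?_).trans (by simp)
    refine (Finset.card_insert_le _ _).trans ?_
    rw [G.card_neighborFinset_eq_degree, hreg]
  set W : Finset V := Finset.univ \ (S ∪ B) with hW
  have hSW : ∀ s ∈ S, ∀ w ∈ W, ¬ G.Adj s w := by
    intro s hs w hw hadj
    simp only [hW, Finset.mem_sdiff, Finset.mem_univ, true_and, Finset.mem_union, not_or, hB,
      Finset.mem_biUnion, Finset.mem_range, Finset.mem_insert, SimpleGraph.mem_neighborFinset,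
      not_exists, not_and] at hw
    obtain ⟨i, hi, hiw⟩ := h.inv w hw.1 (fun i hi => (hw.2 i hi).1) ⟨s, hs, hadj⟩
    exact (hw.2 i hi).2 hiw
  have hd1 : (1 : ℝ) ≤ d := by exact_mod_cast hdpos
  have hn10 : 10 * d < n := by
    have : (10 : ℝ) * d < n := by linarith
    exact_mod_cast this
  have hBn : 16 * B.card ≤ n := by nlinarith
  have hWn : n ≤ 4 * W.card := by
    have h1 : W.card = n - (S ∪ B).card := by
      rw [hW, Finset.card_sdiff_of_subset (Finset.subset_univ _), Finset.card_univ, hn]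
    have h2 := Finset.card_union_le S B
    omega
  have hSn : n ≤ 4 * S.card := by omega
  have hpow : (d : ℝ) ^ ((3 : ℝ) / 4) ≤ d := by
    conv_rhs => rw [← Real.rpow_one (d : ℝ)]
    exact Real.rpow_le_rpow_of_exponent_le hd1 (by norm_num)
  have hspec' : ∀ i, i ≠ e ⟨0, hnpos⟩ → |hA.eigenvalues i| ≤ lam := by
    intro i hi
    have := hspec (e.symm i) (by
      intro h0
      apply hi
      rw [← e.apply_symm_apply i]
      congr 1
      exact Fin.ext h0)
    rwa [e.apply_symm_apply] at this
  have hlam0 : 0 ≤ lam := (abs_nonneg _).trans (hspec ⟨1, by omega⟩ (by simp))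
  have hmix := mixing_of_no_edges hreg hA _ hspec' (by linarith) S W hSW
  rw [hn] at hmix
  have hSr : (n : ℝ) ≤ 4 * S.card := by exact_mod_cast hSn
  have hWr : (n : ℝ) ≤ 4 * W.card := by exact_mod_cast hWn
  have hnr : (0 : ℝ) < n := by exact_mod_cast hnpos
  have hprod : (n : ℝ) ^ 2 ≤ 16 * (S.card * W.card) := by nlinarith
  set q : ℝ := S.card * W.card with hq
  have hqpos : 0 < q := by nlinarith [pow_pos hnr 2]
  have h1 : (d : ℝ) ^ 2 * q ≤ n ^ 2 * lam ^ 2 := by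
    refine le_of_mul_le_mul_right ?_ hqpos
    linarith
  have h2 : (n : ℝ) ^ 2 * lam ^ 2 ≤ 16 * q * lam ^ 2 := by gcongr
  have h3 : (d : ℝ) ^ 2 ≤ 16 * lam ^ 2 := by
    refine le_of_mul_le_mul_right ?_ hqpos
    linarith
  have h4 : lam ≤ d / 100 := by linarith
  nlinarith
end

section
/- There is an absolute constant $A > 0$ such that for all sufficiently large integers $k$ and all positive integers $n$, the $k$-colour induced size-Ramsey number of the path $P_n$ satisfies $\hat{r}^k_{ind}(P_n) \le A \, n k^3 \log^2 k$. -/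
/-!
The graph is a random bipartite graph with `N` vertices on each side and edge probability
`1 / r`, where `r` is of order `n k` and the expected degree `d = N / r` is of order `k log k`; it
has `O(N d) = O(n k³ log² k)` edges.

*Finding the path.* Given a colouring, take the most popular colour class and, inside it, a set `W`
of vertices in which the colour class `H` has minimum degree at least `D`, where `D` is of order
`log k` (`exists_minDegree_subset`). Run a depth-first search in `H[W]` that extends the current
path by an unvisited vertex only if the extended path is still induced in `G`, and discards the end
of the path otherwise. Suppose the path never acquires `n` edges. When `n` vertices have been
discarded, the set `Q` of discarded vertices and path vertices has at most `2 n` elements, and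
each of the `D n` or more `H`-edges from a discarded vertex leads into `Q` or to a vertex having at
least two `G`-neighbours in `Q` (`DfsState.blocked`). The set of such edges of `G`
(`stuckPairs G Q`) only depends on `Q`, so it suffices that it has fewer than `D n` elements for
every `Q` of size at most `2 n` (`exists_monoInducedPath`).

*The random graph.* For fixed `Q` the edges in question are grouped by their endpoint opposite to
`Q`. The contributions of the vertices on one side are independent, and a vertex outside `Q`
contributes only if it has two neighbours in `Q`, which gives an exponential moment of size
`1 + O((n / r) ^ 2)` (`sum_two_pow_load_le`). Markov's inequality yields a failure probability
`exp (-Ω(n log k))` with a constant that beats the `exp (O(n log k))` choices of `Q`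
(`card_exists_load_le`, `exists_labelling`). Probabilities are expressed by counting labellings
`ω : Fin N → Fin N → Fin r`, with an edge wherever the label is `0`.
-/

/-- In the edge-coloured graph `(G, col)` there is a monochromatic copy of the path `P_n`
(with `n` edges) which is induced in `G`, given by a vertex sequence `p : Fin (n+1) → V`:
distinct vertices, consecutive vertices adjacent with all these edges of one colour `c₀`,
non-consecutive vertices non-adjacent in `G`. -/
def IsMonoInducedPathSeq {V : Type*} {k : ℕ} (G : SimpleGraph V) (col : Sym2 V → Fin k)
    {L : ℕ} (p : Fin (L + 1) → V) : Prop :=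
  Function.Injective p ∧
    (∃ c₀ : Fin k, ∀ i j : Fin (L + 1), (i : ℕ) + 1 = (j : ℕ) →
      G.Adj (p i) (p j) ∧ col s(p i, p j) = c₀) ∧
    (∀ i j : Fin (L + 1), (i : ℕ) + 1 < (j : ℕ) → ¬ G.Adj (p i) (p j))

/-! ### Depth-first search for monochromatic induced paths -/

/-- The list `l` is a path in `H` whose vertex sequence is induced with respect to `G`. -/
def IndPath {V : Type*} (G H : SimpleGraph V) (l : List V) : Prop :=
  ∀ (i j : ℕ) (hij : i < j) (hj : j < l.length),
    l[i] ≠ l[j] ∧ (i + 1 = j → H.Adj l[i] l[j]) ∧ (i + 1 < j → ¬ G.Adj l[i] l[j])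

lemma IndPath.tail {V : Type*} {G H : SimpleGraph V} {v : V} {l : List V}
    (h : IndPath G H (v :: l)) : IndPath G H l := by
  intro i j hij hj
  have := h (i + 1) (j + 1) (by omega) (by simpa using hj)
  simp only [List.getElem_cons_succ] at this
  exact ⟨this.1, fun e => this.2.1 (by omega), fun e => this.2.2 (by omega)⟩

lemma IndPath.notMem_tail {V : Type*} {G H : SimpleGraph V} {v : V} {l : List V}
    (h : IndPath G H (v :: l)) : v ∉ l := by
  intro hv
  obtain ⟨j, hj, rfl⟩ := List.getElem_of_mem hv
  have := (h 0 (j + 1) (by omega) (by simpa using hj)).1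
  simp at this

lemma IndPath.singleton {V : Type*} (G H : SimpleGraph V) (u : V) : IndPath G H [u] := by
  intro i j hij hj
  simp at hj
  omega

lemma IndPath.cons {V : Type*} {G H : SimpleGraph V} {u v : V} {l : List V}
    (h : IndPath G H (v :: l)) (huv : H.Adj u v) (hu : u ∉ v :: l)
    (hl : ∀ w ∈ l, ¬ G.Adj u w) : IndPath G H (u :: v :: l) := by
  intro i j hij hj
  obtain ⟨j, rfl⟩ : ∃ j', j = j' + 1 := ⟨j - 1, by omega⟩
  have hj' : j < (v :: l).length := by simpa using hj
  rcases i with _ | i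
  · simp only [List.getElem_cons_succ, List.getElem_cons_zero]
    refine ⟨fun e => hu (e ▸ List.getElem_mem hj'), ?_, ?_⟩
    · intro e
      obtain rfl : j = 0 := by omega
      simpa using huv
    · intro e
      obtain ⟨j, rfl⟩ : ∃ j', j = j' + 1 := ⟨j - 1, by omega⟩
      simp only [List.getElem_cons_succ]
      exact hl _ (List.getElem_mem _)
  · have := h i j (by omega) hj'
    simp only [List.getElem_cons_succ]
    exact ⟨this.1, fun e => this.2.1 (by omega), fun e => this.2.2 (by omega)⟩

/-- A state of the depth-first search inside the vertex set `W`: `P` is the current path (its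
head is the active end) and `S` is the set of discarded vertices. An unvisited `H`-neighbour `u`
of a discarded vertex `s` must have another `G`-neighbour among the visited vertices. -/
structure DfsState {V : Type*} (G H : SimpleGraph V) (W : Finset V) (S : Finset V)
    (P : List V) : Prop where
  path : IndPath G H P
  path_sub : ∀ v ∈ P, v ∈ W
  sub : S ⊆ W
  disj : ∀ v ∈ P, v ∉ S
  blocked : ∀ s ∈ S, ∀ u ∈ W, u ∉ S → u ∉ P → H.Adj s u →
    ∃ w, (w ∈ S ∨ w ∈ P) ∧ w ≠ s ∧ G.Adj w u

/-- The search keeps running until it has either found a long path or discarded `n` vertices: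
every step increases `2 |S| + |P|` by one. -/
lemma dfs_progress {V : Type*} [DecidableEq V] (G H : SimpleGraph V)
    (W : Finset V) (n : ℕ) (hn : 0 < n) (hW : n ≤ W.card) (m : ℕ) :
    (∃ l, IndPath G H l ∧ l.length = n + 1) ∨
    (∃ S P, DfsState G H W S P ∧ S.card = n ∧ P.length ≤ n) ∨
    (∃ S P, DfsState G H W S P ∧ S.card < n ∧ P.length ≤ n ∧ 2 * S.card + P.length = m) := by
  induction m with
  | zero =>
    refine Or.inr (Or.inr ⟨∅, [], ⟨?_, ?_, ?_, ?_, ?_⟩, ?_, ?_, ?_⟩) <;> simp [IndPath, hn]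
  | succ m ih =>
    rcases ih with h | h | ⟨S, P, hst, hS, hP, hm⟩
    · exact Or.inl h
    · exact Or.inr (Or.inl h)
    -- pushing a vertex keeps the state valid
    have push : ∀ u ∈ W, u ∉ S → u ∉ P → IndPath G H (u :: P) →
        (∃ l, IndPath G H l ∧ l.length = n + 1) ∨
        (∃ S P, DfsState G H W S P ∧ S.card = n ∧ P.length ≤ n) ∨
        (∃ S P, DfsState G H W S P ∧ S.card < n ∧ P.length ≤ n ∧
          2 * S.card + P.length = m + 1) := by
      intro u huW huS huP hpath
      rcases Nat.lt_or_ge P.length n with hlt | hge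
      · refine Or.inr (Or.inr ⟨S, u :: P, ⟨hpath, ?_, hst.sub, ?_, ?_⟩, hS, ?_, ?_⟩)
        · intro v hv
          rcases List.mem_cons.1 hv with rfl | hv
          · exact huW
          · exact hst.path_sub v hv
        · intro v hv
          rcases List.mem_cons.1 hv with rfl | hv
          · exact huS
          · exact hst.disj v hv
        · intro s hs x hxW hxS hxP hsx
          obtain ⟨w, hw, h1, h2⟩ := hst.blocked s hs x hxW hxS
            (fun h => hxP (List.mem_cons_of_mem _ h)) hsx
          exact ⟨w, hw.imp id (List.mem_cons_of_mem _), h1, h2⟩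
        · simpa using hlt
        · simp only [List.length_cons]; omega
      · exact Or.inl ⟨u :: P, hpath, by simp only [List.length_cons]; omega⟩
    cases P with
    | nil =>
      obtain ⟨u, hu, huS⟩ := Finset.exists_mem_notMem_of_card_lt_card (lt_of_lt_of_le hS hW)
      exact push u hu huS (by simp) (IndPath.singleton G H u)
    | cons v P =>
      by_cases hex : ∃ u ∈ W, u ∉ S ∧ u ∉ v :: P ∧ H.Adj u v ∧ ∀ w ∈ P, ¬ G.Adj u w
      · obtain ⟨u, huW, huS, huP, huv, hw⟩ := hex
        exact push u huW huS huP (hst.path.cons huv huP hw)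
      · push Not at hex
        have hvS : v ∉ S := hst.disj v (by simp)
        have hvP : v ∉ P := hst.path.notMem_tail
        -- popping the blocked end of the path
        have hnew : DfsState G H W (insert v S) P := by
          refine ⟨hst.path.tail, fun x hx => hst.path_sub x (List.mem_cons_of_mem _ hx), ?_, ?_, ?_⟩
          · exact Finset.insert_subset (hst.path_sub v (by simp)) hst.sub
          · intro x hx hxS
            rcases Finset.mem_insert.1 hxS with rfl | hxS
            · exact hvP hx
            · exact hst.disj x (List.mem_cons_of_mem _ hx) hxS
          · intro s hs x hxW hxS hxP hsx
            have hxv : x ≠ v := fun e => hxS (e ▸ Finset.mem_insert_self _ _)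
            have hxS' : x ∉ S := fun e => hxS (Finset.mem_insert_of_mem e)
            have hxP' : x ∉ v :: P := by simp [hxv, hxP]
            rcases Finset.mem_insert.1 hs with rfl | hs
            · obtain ⟨w, hwP, hw⟩ := hex x hxW hxS' hxP' hsx.symm
              exact ⟨w, Or.inr hwP, fun e => hvP (e ▸ hwP), hw.symm⟩
            · obtain ⟨w, hw, h1, h2⟩ := hst.blocked s hs x hxW hxS' hxP' hsx
              refine ⟨w, ?_, h1, h2⟩
              rcases hw with hw | hw
              · exact Or.inl (Finset.mem_insert_of_mem hw)
              · rcases List.mem_cons.1 hw with rfl | hw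
                · exact Or.inl (Finset.mem_insert_self _ _)
                · exact Or.inr hw
        have hc : (insert v S).card = S.card + 1 := Finset.card_insert_of_notMem hvS
        simp only [List.length_cons] at hP hm
        rcases Nat.lt_or_ge (S.card + 1) n with hlt | hge
        · exact Or.inr (Or.inr ⟨_, _, hnew, by omega, by omega, by omega⟩)
        · exact Or.inr (Or.inl ⟨_, _, hnew, by omega, by omega⟩)

open Classical in
/-- The ordered edges `(s, u)` of `G` with `s ∈ Q` for which `u` lies in `Q` or has a second
neighbour in `Q`. These are the edges along which the search can get stuck. -/
noncomputable def stuckPairs {V : Type*} [Fintype V] (G : SimpleGraph V) (Q : Finset V) :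
    Finset (V × V) :=
  Finset.univ.filter fun x => x.1 ∈ Q ∧ G.Adj x.1 x.2 ∧
    (x.2 ∈ Q ∨ ∃ w ∈ Q, w ≠ x.1 ∧ G.Adj w x.2)

/-- If `H ≤ G` has minimum degree at least `D` inside `W`, and no set `Q` of at most `2 n`
vertices has `D n` stuck pairs, then the search finds a path with `n` edges. -/
lemma exists_indPath {V : Type*} [Fintype V] [DecidableEq V] (G H : SimpleGraph V)
    [DecidableRel H.Adj] (hHG : H ≤ G) (W : Finset V) (n D : ℕ) (hn : 0 < n) (hW : n ≤ W.card)
    (hdeg : ∀ s ∈ W, D ≤ (W.filter (H.Adj s)).card)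
    (hbad : ∀ Q : Finset V, Q.card ≤ 2 * n → (stuckPairs G Q).card < D * n) :
    ∃ l, IndPath G H l ∧ l.length = n + 1 := by
  rcases dfs_progress G H W n hn hW (3 * n + 1) with h | ⟨S, P, hst, hS, hP⟩ | ⟨S, P, _, h1, h2, h3⟩
  · exact h
  · exfalso
    have hQ : (S ∪ P.toFinset).card ≤ 2 * n := by
      have := Finset.card_union_le S P.toFinset
      have := P.toFinset_card_le
      omega
    have hlow : D * n ≤ (S.sigma fun s => W.filter (H.Adj s)).card := by
      rw [Finset.card_sigma, ← hS, mul_comm, ← smul_eq_mul]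
      exact Finset.card_nsmul_le_sum _ _ _ fun s hs => hdeg s (hst.sub hs)
    have hup : (S.sigma fun s => W.filter (H.Adj s)).card
        ≤ (stuckPairs G (S ∪ P.toFinset)).card := by
      refine Finset.card_le_card_of_injOn (fun x => (x.1, x.2)) ?_ ?_
      · rintro ⟨s, u⟩ hx
        simp only [Finset.coe_sigma, Set.mem_sigma_iff, Finset.mem_coe, Finset.mem_filter] at hx
        obtain ⟨hs, huW, hsu⟩ := hx
        simp only [stuckPairs, Finset.coe_filter, Finset.mem_univ, true_and, Set.mem_ofPred_eq,
          Finset.mem_union, List.mem_toFinset]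
        refine ⟨Or.inl hs, hHG hsu, ?_⟩
        by_cases huS : u ∈ S
        · exact Or.inl (Or.inl huS)
        by_cases huP : u ∈ P
        · exact Or.inl (Or.inr huP)
        exact Or.inr (hst.blocked s hs u huW huS huP hsu)
      · rintro ⟨s, u⟩ _ ⟨s', u'⟩ _ h
        simp only [Prod.mk.injEq] at h
        obtain ⟨rfl, rfl⟩ := h
        rfl
    have := hbad _ hQ
    omega
  · omega

/-- A graph with at least `2 D |V|` edges has a vertex subset `W` inside which all degrees are
at least `D`, and which still carries at least `D |V|` edges. -/
lemma exists_minDegree_subset {V : Type*} [Fintype V] [DecidableEq V] (H : SimpleGraph V)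
    [DecidableRel H.Adj] (D : ℕ) (hE : 2 * D * Fintype.card V ≤ H.edgeFinset.card) :
    ∃ W : Finset V, (∀ s ∈ W, D ≤ (W.filter (H.Adj s)).card) ∧
      2 * D * Fintype.card V ≤ ∑ s ∈ W, (W.filter (H.Adj s)).card := by
  -- maximise `2 e(W) - 2 D |W|`
  obtain ⟨W, -, hmax⟩ := Finset.exists_max_image (Finset.univ : Finset (Finset V))
    (fun W => (∑ s ∈ W, (W.filter (H.Adj s)).card : ℤ) - 2 * D * W.card) ⟨∅, by simp⟩
  refine ⟨W, ?_, ?_⟩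
  · intro v hv
    have h := hmax (W.erase v) (Finset.mem_univ _)
    have hcard : ((W.erase v).card : ℤ) = W.card - 1 := by
      rw [Finset.card_erase_of_mem hv, Nat.cast_sub (Finset.card_pos.2 ⟨v, hv⟩)]; simp
    have hsplit : ∑ s ∈ W, (W.filter (H.Adj s)).card
        = (∑ s ∈ W.erase v, (W.filter (H.Adj s)).card) + (W.filter (H.Adj v)).card :=
      (Finset.sum_erase_add _ _ hv).symm
    have hdeg : ∀ s ∈ W.erase v, (W.filter (H.Adj s)).card
        = ((W.erase v).filter (H.Adj s)).card + if H.Adj v s then 1 else 0 := by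
      intro s _
      rw [Finset.filter_erase]
      by_cases hvs : H.Adj v s
      · have hmem : v ∈ W.filter (H.Adj s) := Finset.mem_filter.2 ⟨hv, hvs.symm⟩
        rw [Finset.card_erase_of_mem hmem, if_pos hvs]
        have := Finset.card_pos.2 ⟨v, hmem⟩
        omega
      · have hmem : v ∉ W.filter (H.Adj s) := fun h => hvs (Finset.mem_filter.1 h).2.symm
        rw [Finset.erase_eq_of_notMem hmem, if_neg hvs]
        rfl
    have hone : ∑ s ∈ W.erase v, (if H.Adj v s then 1 else 0) = (W.filter (H.Adj v)).card := by
      rw [← Finset.card_filter, Finset.filter_erase, Finset.erase_eq_of_notMem]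
      simp
    rw [Finset.sum_congr rfl hdeg, Finset.sum_add_distrib, hone] at hsplit
    have hsplit' : (∑ s ∈ W, (W.filter (H.Adj s)).card : ℤ)
        = (∑ s ∈ W.erase v, ((W.erase v).filter (H.Adj s)).card : ℤ)
          + (W.filter (H.Adj v)).card + (W.filter (H.Adj v)).card := by exact_mod_cast hsplit
    rw [hcard, hsplit'] at h
    have : (D : ℤ) ≤ (W.filter (H.Adj v)).card := by linarith
    exact_mod_cast this
  · have h := hmax Finset.univ (Finset.mem_univ _)
    have hsum : ∑ s : V, ((Finset.univ.filter (H.Adj s)).card) = 2 * H.edgeFinset.card := by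
      rw [← H.sum_degrees_eq_twice_card_edges]
      refine Finset.sum_congr rfl fun s _ => ?_
      rw [← SimpleGraph.card_neighborFinset_eq_degree, SimpleGraph.neighborFinset_eq_filter]
    have hsum' : (∑ s : V, ((Finset.univ.filter (H.Adj s)).card) : ℤ)
        = 2 * H.edgeFinset.card := by exact_mod_cast hsum
    rw [hsum', Finset.card_univ] at h
    have hE' : (2 * D * Fintype.card V : ℤ) ≤ H.edgeFinset.card := by exact_mod_cast hE
    have hpos : (0 : ℤ) ≤ 2 * D * W.card := by positivity
    have : (2 * D * Fintype.card V : ℤ) ≤ ∑ s ∈ W, ((W.filter (H.Adj s)).card : ℤ) := by linarith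
    exact_mod_cast this

/-- The deterministic part: many edges and few stuck pairs force a monochromatic induced path
in every colouring. -/
lemma exists_monoInducedPath {V : Type*} [Fintype V] [DecidableEq V] (G : SimpleGraph V)
    [DecidableRel G.Adj] (n k D : ℕ) (hn : 0 < n) (hk : 0 < k) (hV : n ≤ Fintype.card V)
    (hE : k * (2 * D * Fintype.card V) ≤ G.edgeFinset.card)
    (hbad : ∀ Q : Finset V, Q.card ≤ 2 * n → (stuckPairs G Q).card < D * n)
    (col : Sym2 V → Fin k) : ∃ p : Fin (n + 1) → V, IsMonoInducedPathSeq G col p := by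
  have : Nonempty (Fin k) := ⟨⟨0, hk⟩⟩
  obtain ⟨c, -, hc⟩ := Finset.exists_le_card_fiber_of_mul_le_card_of_maps_to
    (s := G.edgeFinset) (t := (Finset.univ : Finset (Fin k))) (f := col)
    (fun _ _ => Finset.mem_univ _) Finset.univ_nonempty (by simpa using hE)
  let H : SimpleGraph V :=
    { Adj := fun u v => G.Adj u v ∧ col s(u, v) = c
      symm := ⟨fun u v h => ⟨h.1.symm, by rw [Sym2.eq_swap]; exact h.2⟩⟩
      loopless := ⟨fun u h => G.loopless.irrefl u h.1⟩ }
  have hHG : H ≤ G := fun u v h => h.1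
  have : DecidableRel H.Adj := fun u v => inferInstanceAs (Decidable (_ ∧ _))
  have hHE : H.edgeFinset = G.edgeFinset.filter (fun e => col e = c) := by
    ext e
    induction e with
    | _ u v => simp [H]
  obtain ⟨W, hdeg, hsum⟩ := exists_minDegree_subset H D (by rw [hHE]; exact hc)
  have hW : n ≤ W.card := by
    by_contra hlt
    have h1 := hbad W (by omega)
    have h2 : ∑ s ∈ W, (W.filter (H.Adj s)).card ≤ (stuckPairs G W).card := by
      rw [← Finset.card_sigma]
      refine Finset.card_le_card_of_injOn (fun x => (x.1, x.2)) ?_ ?_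
      · rintro ⟨s, u⟩ hx
        simp only [Finset.coe_sigma, Set.mem_sigma_iff, Finset.mem_coe, Finset.mem_filter] at hx
        simp only [stuckPairs, Finset.coe_filter, Finset.mem_univ, true_and, Set.mem_ofPred_eq]
        exact ⟨hx.1, hHG hx.2.2, Or.inl hx.2.1⟩
      · rintro ⟨s, u⟩ _ ⟨s', u'⟩ _ h
        simp only [Prod.mk.injEq] at h
        obtain ⟨rfl, rfl⟩ := h
        rfl
    have h3 : D * n ≤ 2 * D * Fintype.card V := by nlinarith [Nat.zero_le (D * Fintype.card V)]
    omega
  obtain ⟨l, hl, hlen⟩ := exists_indPath G H hHG W n D hn hW hdeg hbad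
  refine ⟨fun i => l[(i : ℕ)]'(by omega), ?_, ⟨c, ?_⟩, ?_⟩
  · intro i j hij
    by_contra hne
    rcases lt_or_gt_of_ne hne with h | h
    · exact (hl i j h (by omega)).1 hij
    · exact (hl j i h (by omega)).1 hij.symm
  · intro i j hij
    exact (hl i j (by omega) (by omega)).2.1 hij
  · intro i j hij
    exact (hl i j (by omega) (by omega)).2.2 hij

/-! ### Exponential moments for random labellings -/

/-- The number of `a ∈ Q` with `c a = 0`: the number of neighbours in `Q` of a vertex whose
adjacencies are recorded by `c`, an edge being present exactly when the label is `0`. -/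
def hits {α : Type*} {r : ℕ} [NeZero r] (Q : Finset α) (c : α → Fin r) : ℕ :=
  (Q.filter fun a => c a = 0).card

/-- The contribution of a vertex `b` to the stuck pairs of a vertex set with part `R` on the side
of `b` and part `Q` on the opposite side: all edges from `b` into `Q`, provided `b` lies in `R` or
sends at least two edges to `Q`. The adjacencies of `b` are recorded by `c`. -/
def load {α : Type*} [DecidableEq α] {r : ℕ} [NeZero r] (Q R : Finset α) (b : α)
    (c : α → Fin r) : ℕ :=
  if b ∈ R ∨ 2 ≤ hits Q c then hits Q c else 0

section Counting

variable {α : Type*} [Fintype α] [DecidableEq α] {r : ℕ} [NeZero r]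

/-- The generating function of a binomial random variable with success probability `1 / r`. -/
lemma sum_pow_hits_le (Q : Finset α) (y : ℝ) (hy : 0 ≤ y) :
    ∑ c : α → Fin r, y ^ hits Q c
      ≤ (r : ℝ) ^ Fintype.card α * Real.exp ((y - 1) * Q.card / r) := by
  have hr : (1 : ℝ) ≤ r := by exact_mod_cast NeZero.one_le
  have h1 : ∀ c : α → Fin r, y ^ hits Q c = ∏ a, (if a ∈ Q ∧ c a = 0 then y else 1) := by
    intro c
    rw [Finset.prod_ite, Finset.prod_const, Finset.prod_const_one, mul_one, hits]
    congr 2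
    ext a
    simp
  have h2 : ∀ a, ∑ j : Fin r, (if a ∈ Q ∧ j = 0 then y else 1)
      = r * (if a ∈ Q then 1 + (y - 1) / r else 1) := by
    intro a
    by_cases ha : a ∈ Q
    · have h3 : ∀ j : Fin r, (if a ∈ Q ∧ j = 0 then y else 1)
          = 1 + if j = 0 then y - 1 else 0 := by
        intro j; by_cases hj : j = 0 <;> simp [ha, hj]
      rw [Finset.sum_congr rfl fun j _ => h3 j, Finset.sum_add_distrib]
      simp only [Finset.sum_const, Finset.card_univ, Fintype.card_fin, nsmul_eq_mul, mul_one,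
        Finset.sum_ite_eq', Finset.mem_univ, if_true, ha]
      field_simp
    · simp [ha]
  rw [Finset.sum_congr rfl fun c _ => h1 c,
    ← Fintype.prod_sum fun (a : α) (j : Fin r) => if a ∈ Q ∧ j = 0 then y else 1,
    Finset.prod_congr rfl fun a _ => h2 a, Finset.prod_mul_distrib, Finset.prod_const,
    Finset.card_univ]
  gcongr
  rw [Finset.prod_ite, Finset.prod_const_one, mul_one, Finset.prod_const]
  have h4 : (Finset.univ.filter fun a => a ∈ Q) = Q := by ext; simp
  rw [h4, mul_comm (y - 1), mul_div_assoc, Real.exp_nat_mul]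
  have h5 : 0 ≤ 1 + (y - 1) / r := by
    have : (-1 : ℝ) ≤ (y - 1) / r := by rw [le_div_iff₀ (by linarith)]; linarith
    linarith
  exact pow_le_pow_left₀ h5 (by linarith [Real.add_one_le_exp ((y - 1) / r)]) _

/-- A vertex outside `R` contributes to the load only when it has two neighbours in `Q`, which makes
its generating function `1 + O((|Q| / r) ^ 2)`. -/
lemma sum_two_pow_load_le (Q R : Finset α) (b : α) (hQ : 0 < Q.card) (hQr : 2 * Q.card ≤ r) :
    ∑ c : α → Fin r, (2 : ℝ) ^ load Q R b c ≤ (r : ℝ) ^ Fintype.card α *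
      Real.exp ((if b ∈ R then (Q.card : ℝ) / r else 0) + 3 * (2 * Q.card / r) ^ 2) := by
  have hr : (1 : ℝ) ≤ r := by exact_mod_cast NeZero.one_le
  by_cases hb : b ∈ R
  · simp only [load, hb, true_or, if_true]
    refine (sum_pow_hits_le Q 2 (by norm_num)).trans ?_
    gcongr
    have : (0 : ℝ) ≤ 3 * (2 * Q.card / r) ^ 2 := by positivity
    rw [show ((2 : ℝ) - 1) * Q.card / r = Q.card / r by ring]
    linarith
  · simp only [load, hb, false_or, if_false, zero_add]
    set θ : ℝ := 2 * Q.card / r with hθ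
    have hQ' : (0 : ℝ) < Q.card := by exact_mod_cast hQ
    have hθ0 : 0 < θ := by positivity
    have hθ1 : θ ≤ 1 := by
      rw [hθ, div_le_one (by linarith)]; exact_mod_cast hQr
    -- for `2 ≤ z`, `2 ^ z ≤ θ ^ 2 * (2 / θ) ^ z`
    have h1 : ∀ c : α → Fin r, (2 : ℝ) ^ (if 2 ≤ hits Q c then hits Q c else 0)
        ≤ 1 + θ ^ 2 * (2 / θ) ^ hits Q c := by
      intro c
      split_ifs with hc
      · have : (2 : ℝ) ^ hits Q c ≤ θ ^ 2 * (2 / θ) ^ hits Q c := by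
          rw [div_pow 2 θ, mul_div_assoc', le_div_iff₀ (by positivity), mul_comm]
          exact mul_le_mul_of_nonneg_right (pow_le_pow_of_le_one hθ0.le hθ1 hc) (by positivity)
        linarith
      · have : 0 ≤ θ ^ 2 * (2 / θ) ^ hits Q c := by positivity
        simpa using this
    calc ∑ c : α → Fin r, (2 : ℝ) ^ (if 2 ≤ hits Q c then hits Q c else 0)
        ≤ ∑ c : α → Fin r, (1 + θ ^ 2 * (2 / θ) ^ hits Q c) := Finset.sum_le_sum fun c _ => h1 c
      _ = (r : ℝ) ^ Fintype.card α + θ ^ 2 * ∑ c : α → Fin r, (2 / θ) ^ hits Q c := by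
          rw [Finset.sum_add_distrib, ← Finset.mul_sum]
          simp
      _ ≤ (r : ℝ) ^ Fintype.card α
          + θ ^ 2 * ((r : ℝ) ^ Fintype.card α * Real.exp ((2 / θ - 1) * Q.card / r)) := by
          gcongr
          exact sum_pow_hits_le Q _ (by positivity)
      _ ≤ (r : ℝ) ^ Fintype.card α + θ ^ 2 * ((r : ℝ) ^ Fintype.card α * 3) := by
          gcongr
          have h2 : (2 / θ - 1) * Q.card / r ≤ 1 := by
            have h3 : 2 / θ * Q.card / r = 1 := by rw [hθ]; field_simp
            have h4 : (0 : ℝ) ≤ Q.card / r := by positivity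
            have h5 : (2 / θ - 1) * Q.card / r = 2 / θ * Q.card / r - Q.card / r := by ring
            linarith
          exact (Real.exp_le_exp.2 h2).trans Real.exp_one_lt_three.le
      _ = (r : ℝ) ^ Fintype.card α * (3 * θ ^ 2 + 1) := by ring
      _ ≤ _ := by
          gcongr
          exact Real.add_one_le_exp _

lemma sum_two_pow_sum_load_le (Q R : Finset α) (hQ : 0 < Q.card) (hQr : 2 * Q.card ≤ r) :
    ∑ ω : α → α → Fin r, (2 : ℝ) ^ (∑ b, load Q R b (ω b))
      ≤ ((r : ℝ) ^ Fintype.card α) ^ Fintype.card α *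
        Real.exp (R.card * (Q.card / r) + Fintype.card α * (3 * (2 * Q.card / r) ^ 2)) := by
  calc ∑ ω : α → α → Fin r, (2 : ℝ) ^ (∑ b, load Q R b (ω b))
      = ∏ b : α, ∑ c : α → Fin r, (2 : ℝ) ^ load Q R b c := by
        rw [Fintype.prod_sum]
        exact Finset.sum_congr rfl fun ω _ => (Finset.prod_pow_eq_pow_sum _ _ _).symm
    _ ≤ ∏ b : α, ((r : ℝ) ^ Fintype.card α *
        Real.exp ((if b ∈ R then (Q.card : ℝ) / r else 0) + 3 * (2 * Q.card / r) ^ 2)) :=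
        Finset.prod_le_prod (fun _ _ => Finset.sum_nonneg fun _ _ => by positivity)
          fun b _ => sum_two_pow_load_le Q R b hQ hQr
    _ = _ := by
        rw [Finset.prod_mul_distrib, ← Real.exp_sum, Finset.sum_add_distrib]
        simp

lemma sum_pow_edges_le (y : ℝ) (hy : 0 ≤ y) :
    ∑ ω : α → α → Fin r, y ^ (∑ b, hits Finset.univ (ω b))
      ≤ ((r : ℝ) ^ Fintype.card α) ^ Fintype.card α *
        Real.exp (Fintype.card α * ((y - 1) * Fintype.card α / r)) := by
  calc ∑ ω : α → α → Fin r, y ^ (∑ b, hits Finset.univ (ω b))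
      = ∏ _b : α, ∑ c : α → Fin r, y ^ hits Finset.univ c := by
        rw [Fintype.prod_sum]
        exact Finset.sum_congr rfl fun ω _ => (Finset.prod_pow_eq_pow_sum _ _ _).symm
    _ ≤ ∏ _b : α, ((r : ℝ) ^ Fintype.card α *
        Real.exp ((y - 1) * (Finset.univ : Finset α).card / r)) :=
        Finset.prod_le_prod (fun _ _ => Finset.sum_nonneg fun _ _ => by positivity)
          fun b _ => sum_pow_hits_le _ y hy
    _ = _ := by
        rw [Finset.prod_const, mul_pow, ← Real.exp_nat_mul]
        simp

end Counting

/-- Markov's inequality for the counting measure. -/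
lemma card_filter_mul_le {Ω : Type*} [Fintype Ω] (P : Ω → Prop) [DecidablePred P] (f : Ω → ℝ)
    (hf : ∀ ω, 0 ≤ f ω) (t : ℝ) (ht : ∀ ω, P ω → t ≤ f ω) :
    ((Finset.univ.filter P).card : ℝ) * t ≤ ∑ ω, f ω := by
  rw [← nsmul_eq_mul]
  refine (Finset.card_nsmul_le_sum _ f t fun ω hω => ht ω (Finset.mem_filter.1 hω).2).trans ?_
  exact Finset.sum_le_sum_of_subset_of_nonneg (Finset.subset_univ _) fun ω _ _ => hf ω

/-- The bound `C(N, q) ≤ (e N / q) ^ q`, with `e` rounded up to `3`. -/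
lemma choose_le_pow (N q : ℕ) (X : ℝ) (hX : 3 * N ≤ X * q) (hq : 0 < q) :
    (N.choose q : ℝ) ≤ X ^ q := by
  have hq' : (0 : ℝ) < q := by exact_mod_cast hq
  have h1 : (N.choose q : ℝ) ≤ (N : ℝ) ^ q / q.factorial := Nat.choose_le_pow_div q N
  have h2 : (q : ℝ) ^ q / q.factorial ≤ 3 ^ q := by
    refine (Real.pow_div_factorial_le_exp q hq'.le q).trans ?_
    rw [show Real.exp (q : ℝ) = Real.exp 1 ^ q by rw [← Real.exp_nat_mul, mul_one]]
    exact pow_le_pow_left₀ (Real.exp_pos _).le Real.exp_one_lt_three.le _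
  have h3 : (N : ℝ) ^ q / q.factorial = (N / q : ℝ) ^ q * ((q : ℝ) ^ q / q.factorial) := by
    rw [div_pow]; field_simp
  rw [h3] at h1
  refine h1.trans ((mul_le_mul_of_nonneg_left h2 (by positivity)).trans ?_)
  rw [← mul_pow]
  refine pow_le_pow_left₀ (by positivity) ?_ _
  rw [div_mul_eq_mul_div, div_le_iff₀ hq']
  linarith

lemma exp_half_lt_two : Real.exp (1 / 2) ≤ 2 := by
  have h : Real.exp (1 / 2) ^ 2 ≤ 2 ^ 2 := by
    rw [← Real.exp_nat_mul]
    norm_num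
    linarith [Real.exp_one_lt_three]
  exact le_of_sq_le_sq h (by norm_num)

/-- Among `T` outcomes, an exponential moment bound makes an event rarer than one in four. -/
lemma four_mul_lt_of_exp {a T u v : ℝ} (hT : 0 < T) (h : a * Real.exp u ≤ T * Real.exp v)
    (huv : v + 2 ≤ u) : 4 * a < T := by
  by_contra hlt
  push Not at hlt
  have h1 : 4 < Real.exp 2 := by
    have : Real.exp 2 = Real.exp 1 * Real.exp 1 := by rw [← Real.exp_add]; norm_num
    nlinarith [Real.exp_one_gt_d9]
  have h2 : Real.exp v * Real.exp 2 ≤ Real.exp u := by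
    rw [← Real.exp_add]; exact Real.exp_le_exp.2 huv
  have h3 : 0 < Real.exp v := Real.exp_pos v
  have ha : 0 < a := by linarith
  nlinarith [mul_le_mul_of_nonneg_left h2 ha.le, mul_pos ha h3, mul_lt_mul_of_pos_left h1 h3,
    mul_lt_mul_of_pos_left (mul_lt_mul_of_pos_left h1 h3) ha, mul_le_mul_of_nonneg_right hlt h3.le]

lemma exp_le_two_pow {u : ℝ} {m : ℕ} (h : 2 * u ≤ m) : Real.exp u ≤ 2 ^ m := by
  calc Real.exp u ≤ Real.exp (m * (1 / 2)) := Real.exp_le_exp.2 (by linarith)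
    _ = Real.exp (1 / 2) ^ m := Real.exp_nat_mul _ _
    _ ≤ 2 ^ m := pow_le_pow_left₀ (Real.exp_pos _).le exp_half_lt_two _

/-- The union bound over all pairs of sets `Q`, `R` of size `q`. -/
lemma card_exists_load_le {N r : ℕ} [NeZero r] (q m : ℕ) (x C : ℝ) (hq : 0 < q)
    (hqr : 2 * q ≤ r) (hC : (N.choose q : ℝ) ≤ C)
    (hx : q * (q / r) + N * (3 * (2 * q / r) ^ 2) ≤ x) :
    (((Finset.univ : Finset (Fin N → Fin N → Fin r)).filter fun ω => ∃ Q R : Finset (Fin N),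
      Q.card = q ∧ R.card = q ∧ m ≤ ∑ b, load Q R b (ω b)).card : ℝ) * 2 ^ m
      ≤ C ^ 2 * (((r : ℝ) ^ N) ^ N * Real.exp x) := by
  set F := Finset.powersetCard q (Finset.univ : Finset (Fin N)) with hF
  have hFc : F.card = N.choose q := by simp [hF]
  have hsub : ((Finset.univ : Finset (Fin N → Fin N → Fin r)).filter fun ω =>
      ∃ Q R : Finset (Fin N), Q.card = q ∧ R.card = q ∧ m ≤ ∑ b, load Q R b (ω b)) ⊆
      (F ×ˢ F).biUnion fun X => Finset.univ.filter fun ω => m ≤ ∑ b, load X.1 X.2 b (ω b) := by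
    intro ω hω
    obtain ⟨Q, R, hQ, hR, h⟩ := (Finset.mem_filter.1 hω).2
    refine Finset.mem_biUnion.2 ⟨(Q, R), ?_, by simpa using h⟩
    simp [hF, Finset.mem_powersetCard, hQ, hR]
  have h1 := (Finset.card_le_card hsub).trans Finset.card_biUnion_le
  have h2 : ∀ X ∈ F ×ˢ F, (((Finset.univ : Finset (Fin N → Fin N → Fin r)).filter fun ω =>
      m ≤ ∑ b, load X.1 X.2 b (ω b)).card : ℝ) * 2 ^ m ≤ ((r : ℝ) ^ N) ^ N * Real.exp x := by
    rintro ⟨Q, R⟩ hX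
    simp only [hF, Finset.mem_product, Finset.mem_powersetCard, Finset.subset_univ,
      true_and] at hX
    refine (card_filter_mul_le (fun ω : Fin N → Fin N → Fin r => m ≤ ∑ b, load Q R b (ω b))
      (fun ω => (2 : ℝ) ^ (∑ b, load Q R b (ω b))) (fun ω => by positivity) ((2 : ℝ) ^ m)
      fun ω hω => pow_le_pow_right₀ (by norm_num) hω).trans ?_
    refine (sum_two_pow_sum_load_le Q R (by omega) (by omega)).trans ?_
    rw [hX.1, hX.2, Fintype.card_fin]
    gcongr
  calc _ ≤ ((∑ X ∈ F ×ˢ F, ((Finset.univ : Finset (Fin N → Fin N → Fin r)).filter fun ω =>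
        m ≤ ∑ b, load X.1 X.2 b (ω b)).card : ℕ) : ℝ) * 2 ^ m := by
        gcongr
    _ = ∑ X ∈ F ×ˢ F, (((Finset.univ : Finset (Fin N → Fin N → Fin r)).filter fun ω =>
        m ≤ ∑ b, load X.1 X.2 b (ω b)).card : ℝ) * 2 ^ m := by
        rw [Nat.cast_sum, Finset.sum_mul]
    _ ≤ ∑ _X ∈ F ×ˢ F, ((r : ℝ) ^ N) ^ N * Real.exp x := Finset.sum_le_sum h2
    _ = (N.choose q : ℝ) ^ 2 * (((r : ℝ) ^ N) ^ N * Real.exp x) := by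
        rw [Finset.sum_const, Finset.card_product, hFc, nsmul_eq_mul]
        push_cast
        ring
    _ ≤ _ := by gcongr

/-- The random bipartite graph on `N + N` vertices with edge probability `1 / r` has the required
properties with positive probability. -/
lemma exists_labelling (n k ℓ N r d : ℕ) [NeZero r] (hn : 0 < n) (hk : 2 ^ 26 ≤ k) (hℓ : 0 < ℓ)
    (hℓk : ℓ ≤ k) (hkℓ : (k : ℝ) ≤ Real.exp ℓ) (hr : r = 2 ^ 14 * n * k)
    (hd : d = 2 ^ 11 * k * ℓ) (hN : N = r * d) :
    ∃ ω : Fin N → Fin N → Fin r,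
      ∑ b, hits Finset.univ (ω b) ≤ 4 * N * d ∧ N * d ≤ 4 * ∑ b, hits Finset.univ (ω b) ∧
      (∀ Q R : Finset (Fin N), Q.card = 2 * n → R.card = 2 * n →
        ∑ b, load Q R b (ω b) < 64 * ℓ * n) ∧
      (∀ Q R : Finset (Fin N), Q.card = 2 * n → R.card = 2 * n →
        ∑ b, load Q R b (fun a => ω a b) < 64 * ℓ * n) := by
  classical
  have hk0 : 0 < k := by omega
  have hr0 : 0 < r := Nat.pos_of_ne_zero (NeZero.ne r)
  have hnr : (0 : ℝ) < n := by exact_mod_cast hn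
  have hkr : (2 ^ 26 : ℝ) ≤ k := by exact_mod_cast hk
  have hℓr : (1 : ℝ) ≤ ℓ := by exact_mod_cast hℓ
  have hℓkr : (ℓ : ℝ) ≤ k := by exact_mod_cast hℓk
  have hrr : (r : ℝ) = 2 ^ 14 * n * k := by rw [hr]; push_cast; ring
  have hdr : (d : ℝ) = 2 ^ 11 * k * ℓ := by rw [hd]; push_cast; ring
  have hNr : (N : ℝ) = r * d := by rw [hN]; push_cast; ring
  have hrpos : (0 : ℝ) < r := by exact_mod_cast hr0
  have hd0 : 0 < d := by rw [hd]; positivity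
  have hN0 : 0 < N := by rw [hN]; positivity
  have hNdr : (N : ℝ) / r = d := by rw [hNr]; field_simp
  set T : ℝ := ((r : ℝ) ^ N) ^ N with hT
  have hT0 : 0 < T := by positivity
  have hcardΩ : (Fintype.card (Fin N → Fin N → Fin r) : ℝ) = T := by simp [hT]
  -- too many edges
  set B₁ := (Finset.univ : Finset (Fin N → Fin N → Fin r)).filter fun ω =>
    4 * N * d ≤ ∑ b, hits Finset.univ (ω b) with hB₁
  have h₁ : 4 * (B₁.card : ℝ) < T := by
    have h := card_filter_mul_le
      (fun ω : Fin N → Fin N → Fin r => 4 * N * d ≤ ∑ b, hits Finset.univ (ω b))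
      (fun ω => (2 : ℝ) ^ (∑ b, hits Finset.univ (ω b)))
      (fun ω => by positivity) (2 ^ (4 * N * d)) fun ω hω => pow_le_pow_right₀ (by norm_num) hω
    have h' := h.trans (sum_pow_edges_le (α := Fin N) (r := r) 2 (by norm_num))
    rw [Fintype.card_fin, show (N : ℝ) * ((2 - 1) * N / r) = N * (N / r) by ring, hNdr] at h'
    refine four_mul_lt_of_exp (u := 2 * (N * d)) (v := N * d) hT0 ?_ ?_
    · refine le_trans ?_ h'
      gcongr
      exact exp_le_two_pow (by push_cast; linarith)
    · have : 2 ≤ N * d := by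
        have : 2 ≤ d := by rw [hd]; nlinarith [Nat.mul_pos hk0 hℓ]
        nlinarith
      have : (2 : ℝ) ≤ N * d := by exact_mod_cast this
      linarith
  -- too few edges, where `M` is a quarter of the expected number `N * d` of edges
  obtain ⟨M, hM⟩ : ∃ M, M = N * (2 ^ 9 * k * ℓ) := ⟨_, rfl⟩
  have hM4 : N * d = 4 * M := by rw [hM, hd]; ring
  set B₂ := (Finset.univ : Finset (Fin N → Fin N → Fin r)).filter fun ω =>
    ∑ b, hits Finset.univ (ω b) ≤ M with hB₂
  have h₂ : 4 * (B₂.card : ℝ) < T := by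
    have h := card_filter_mul_le
      (fun ω : Fin N → Fin N → Fin r => ∑ b, hits Finset.univ (ω b) ≤ M)
      (fun ω => (1 / 2 : ℝ) ^ (∑ b, hits Finset.univ (ω b)))
      (fun ω => by positivity) ((1 / 2) ^ M)
      fun ω hω => pow_le_pow_of_le_one (by norm_num) (by norm_num) hω
    have h' := h.trans (sum_pow_edges_le (α := Fin N) (r := r) (1 / 2) (by norm_num))
    have hM4r : (N : ℝ) * d = 4 * M := by exact_mod_cast hM4
    rw [Fintype.card_fin, show (N : ℝ) * ((1 / 2 - 1) * N / r) = - (N * (N / r)) / 2 by ring,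
      hNdr, hM4r] at h'
    refine four_mul_lt_of_exp (u := - M) (v := -(4 * M) / 2) hT0 ?_ ?_
    · refine le_trans ?_ h'
      gcongr
      have h1 : Real.exp (-1) ≤ 1 / 2 := by
        rw [Real.exp_neg, one_div]
        exact inv_anti₀ (by norm_num) (by linarith [Real.exp_one_gt_d9])
      calc Real.exp (-(M : ℝ)) = Real.exp (-1) ^ M := by rw [← Real.exp_nat_mul]; ring_nf
        _ ≤ (1 / 2) ^ M := pow_le_pow_left₀ (Real.exp_pos _).le h1 _
    · have : 2 ≤ M := by
        have : 2 ≤ 2 ^ 9 * k * ℓ := by nlinarith [Nat.mul_pos hk0 hℓ]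
        rw [hM]; nlinarith
      have : (2 : ℝ) ≤ M := by exact_mod_cast this
      linarith
  -- a heavily loaded pair of sets: there are at most `exp (16 ℓ n)` pairs, and each has a load of
  -- `64 ℓ n` or more with probability at most `exp (7 ℓ n) / 2 ^ (64 ℓ n) ≤ exp (-25 ℓ n)`
  set B₃ := (Finset.univ : Finset (Fin N → Fin N → Fin r)).filter fun ω =>
    ∃ Q R : Finset (Fin N), Q.card = 2 * n ∧ R.card = 2 * n ∧
      64 * ℓ * n ≤ ∑ b, load Q R b (ω b) with hB₃
  have h₃ : 4 * (B₃.card : ℝ) < T := by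
    have hC : (N.choose (2 * n) : ℝ) ≤ Real.exp (8 * ℓ * n) := by
      refine (choose_le_pow N (2 * n) ((k : ℝ) ^ 4) ?_ (by omega)).trans ?_
      · have h1 : (k : ℝ) ^ 2 * (2 ^ 26 * ℓ) ≤ k ^ 2 * (k * k) := by gcongr
        calc 3 * (N : ℝ) = 3 / 2 * (k ^ 2 * (2 ^ 26 * ℓ)) * n := by
              rw [hNr, hrr, hdr]; ring
          _ ≤ 2 * (k ^ 2 * (k * k)) * n := by gcongr; norm_num
          _ = (k : ℝ) ^ 4 * ((2 * n : ℕ) : ℝ) := by push_cast; ring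
      · rw [← pow_mul, show (8 * ℓ * n : ℝ) = ((4 * (2 * n) : ℕ) : ℝ) * ℓ by push_cast; ring,
          Real.exp_nat_mul]
        exact pow_le_pow_left₀ (by linarith) hkℓ _
    have hx : ((2 * n : ℕ) : ℝ) * ((2 * n : ℕ) / r) + N * (3 * (2 * (2 * n : ℕ) / r) ^ 2)
        ≤ 7 * ℓ * n := by
      have e1 : ((2 * n : ℕ) : ℝ) * ((2 * n : ℕ) / r) = n * (4 / (2 ^ 14 * k)) := by
        rw [hrr]; push_cast; field_simp; norm_num
      have e2 : (N : ℝ) * (3 * (2 * (2 * n : ℕ) / r) ^ 2) = 6 * ℓ * n := by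
        rw [hNr, hdr, hrr]; push_cast; field_simp; norm_num
      have e3 : (4 : ℝ) / (2 ^ 14 * k) ≤ 1 := by
        rw [div_le_one (by positivity)]; linarith
      rw [e1, e2]
      nlinarith
    have h := card_exists_load_le (N := N) (r := r) (2 * n) (64 * ℓ * n) (7 * ℓ * n) _
      (by omega) (by rw [hr]; nlinarith) hC hx
    refine four_mul_lt_of_exp (u := 32 * (ℓ * n)) (v := 23 * (ℓ * n)) hT0 ?_ ?_
    · calc (B₃.card : ℝ) * Real.exp (32 * (ℓ * n)) ≤ B₃.card * 2 ^ (64 * ℓ * n) := by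
            gcongr
            exact exp_le_two_pow (by push_cast; linarith)
        _ ≤ _ := h
        _ = T * Real.exp (23 * (ℓ * n)) := by
            rw [show (23 * (ℓ * n) : ℝ) = 8 * ℓ * n + 8 * ℓ * n + 7 * ℓ * n by ring,
              Real.exp_add, Real.exp_add]
            ring
    · have : (1 : ℝ) ≤ n := by exact_mod_cast hn
      nlinarith
  -- transposition exchanges the two sides of the bipartite graph
  set B₄ := (Finset.univ : Finset (Fin N → Fin N → Fin r)).filter fun ω =>
    ∃ Q R : Finset (Fin N), Q.card = 2 * n ∧ R.card = 2 * n ∧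
      64 * ℓ * n ≤ ∑ b, load Q R b (fun a => ω a b) with hB₄
  have h₄ : B₄.card = B₃.card := by
    refine Finset.card_equiv (Equiv.piComm fun _ _ => Fin r) fun ω => ?_
    simp only [hB₄, hB₃, Finset.mem_filter, Finset.mem_univ, true_and]
    rfl
  have hlt : (B₁ ∪ B₂ ∪ B₃ ∪ B₄).card < Fintype.card (Fin N → Fin N → Fin r) := by
    have c1 := Finset.card_union_le (B₁ ∪ B₂ ∪ B₃) B₄
    have c2 := Finset.card_union_le (B₁ ∪ B₂) B₃
    have c3 := Finset.card_union_le B₁ B₂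
    have c4 : ((B₁ ∪ B₂ ∪ B₃ ∪ B₄).card : ℝ) ≤ B₁.card + B₂.card + B₃.card + B₃.card := by
      exact_mod_cast (by omega : _ ≤ B₁.card + B₂.card + B₃.card + B₃.card)
    have : ((B₁ ∪ B₂ ∪ B₃ ∪ B₄).card : ℝ) < Fintype.card (Fin N → Fin N → Fin r) := by
      rw [hcardΩ]; linarith
    exact_mod_cast this
  obtain ⟨ω, -, hω⟩ := Finset.exists_mem_notMem_of_card_lt_card
    (s := B₁ ∪ B₂ ∪ B₃ ∪ B₄) (t := Finset.univ) (by simpa using hlt)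
  simp only [hB₁, hB₂, hB₃, hB₄, Finset.mem_union, Finset.mem_filter, Finset.mem_univ, true_and,
    not_or, not_exists, not_and, not_le] at hω
  obtain ⟨⟨⟨w1, w2⟩, w3⟩, w4⟩ := hω
  exact ⟨ω, w1.le, by rw [hM4]; omega, w3, w4⟩

/-! ### The bipartite graph of a labelling -/

/-- The bipartite graph on `α ⊕ α` recorded by `ω`: the vertex `inl b` is joined to `inr a` exactly
when the label `ω b a` is `0`. -/
def labelGraph {α : Type*} {r : ℕ} [NeZero r] (ω : α → α → Fin r) : SimpleGraph (α ⊕ α) where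
  Adj u v := match u, v with
    | .inl b, .inr a => ω b a = 0
    | .inr a, .inl b => ω b a = 0
    | _, _ => False
  symm := ⟨fun u v => by rcases u with u | u <;> rcases v with v | v <;> exact id⟩
  loopless := ⟨fun u => by rcases u with u | u <;> exact id⟩

open Classical in
lemma card_edgeFinset_labelGraph {α : Type*} [Fintype α] {r : ℕ} [NeZero r]
    (ω : α → α → Fin r) :
    (labelGraph ω).edgeFinset.card = ∑ b, hits Finset.univ (ω b) := by
  symm
  unfold hits
  rw [← Finset.card_sigma]
  refine Finset.card_bij (fun x _ => s(Sum.inl x.1, Sum.inr x.2)) ?_ ?_ ?_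
  · rintro ⟨b, a⟩ h
    rw [SimpleGraph.mem_edgeFinset, SimpleGraph.mem_edgeSet]
    simpa [labelGraph] using h
  · rintro ⟨b, a⟩ _ ⟨b', a'⟩ _ h
    simp at h
    obtain ⟨rfl, rfl⟩ := h
    rfl
  · intro e he
    induction e with
    | _ u v =>
      rw [SimpleGraph.mem_edgeFinset, SimpleGraph.mem_edgeSet] at he
      rcases u with u | u <;> rcases v with v | v
      · exact he.elim
      · exact ⟨⟨u, v⟩, by simpa [labelGraph] using he, rfl⟩
      · exact ⟨⟨v, u⟩, by simpa [labelGraph] using he, Sym2.eq_swap⟩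
      · exact he.elim

/-- Stuck pairs of `Q` starting on the right are counted by the loads of the left vertices with
respect to the right part of `Q`, and vice versa. -/
lemma card_stuckPairs_labelGraph_le {α : Type*} [Fintype α] [DecidableEq α] {r : ℕ}
    [NeZero r] (ω : α → α → Fin r) (Q : Finset (α ⊕ α)) (L R : Finset α)
    (hL : ∀ b, Sum.inl b ∈ Q → b ∈ L) (hR : ∀ a, Sum.inr a ∈ Q → a ∈ R) :
    (stuckPairs (labelGraph ω) Q).card
      ≤ ∑ b, load R L b (ω b) + ∑ a, load L R a (fun b => ω b a) := by
  set X : Finset (α × α) := Finset.univ.filter fun x =>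
    x.2 ∈ R ∧ ω x.1 x.2 = 0 ∧ (x.1 ∈ L ∨ 2 ≤ hits R (ω x.1)) with hX
  set Y : Finset (α × α) := Finset.univ.filter fun x =>
    x.2 ∈ L ∧ ω x.2 x.1 = 0 ∧ (x.1 ∈ R ∨ 2 ≤ hits L (fun b => ω b x.1)) with hY
  have hcard : ∀ (A B : Finset α) (c : α → α → Fin r),
      ((Finset.univ : Finset (α × α)).filter fun x =>
        x.2 ∈ A ∧ c x.1 x.2 = 0 ∧ (x.1 ∈ B ∨ 2 ≤ hits A (c x.1))).card
        = ∑ b, load A B b (c b) := by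
    intro A B c
    rw [← Finset.univ_product_univ, Finset.card_filter, Finset.sum_product]
    refine Finset.sum_congr rfl fun b _ => ?_
    rw [← Finset.card_filter]
    unfold load
    split_ifs with hb
    · rw [hits]
      congr 1
      ext a
      simp [hb]
    · rw [Finset.card_eq_zero, Finset.filter_eq_empty_iff]
      exact fun a _ h => hb h.2.2
  rw [← hcard R L ω, ← hcard L R (fun a b => ω b a)]
  have htwo : ∀ (A : Finset α) (c : α → Fin r) (a a' : α), a ∈ A → a' ∈ A → a' ≠ a → c a = 0 →
      c a' = 0 → 2 ≤ hits A c := by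
    intro A c a a' ha ha' hne h h'
    exact Finset.one_lt_card.2 ⟨a, by simp [ha, h], a', by simp [ha', h'], hne.symm⟩
  let f : (α × α) ⊕ (α × α) → (α ⊕ α) × (α ⊕ α) :=
    Sum.elim (fun x => (Sum.inr x.2, Sum.inl x.1)) (fun x => (Sum.inl x.2, Sum.inr x.1))
  have hsub : stuckPairs (labelGraph ω) Q ⊆ (X.disjSum Y).image f := by
    rintro ⟨s, u⟩ hsu
    simp only [stuckPairs, Finset.mem_filter, Finset.mem_univ, true_and] at hsu
    obtain ⟨hs, hadj, hu⟩ := hsu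
    rw [Finset.mem_image]
    rcases s with b | a <;> rcases u with b' | a'
    · exact hadj.elim
    · refine ⟨Sum.inr (a', b), ?_, rfl⟩
      simp only [Finset.inr_mem_disjSum, hY, Finset.mem_filter, Finset.mem_univ, true_and]
      refine ⟨hL _ hs, hadj, hu.imp (hR _) ?_⟩
      rintro ⟨w, hw, hne, hwa⟩
      rcases w with w | w
      · exact htwo L _ b w (hL _ hs) (hL _ hw) (fun e => hne (by rw [e])) hadj hwa
      · exact hwa.elim
    · refine ⟨Sum.inl (b', a), ?_, rfl⟩
      simp only [Finset.inl_mem_disjSum, hX, Finset.mem_filter, Finset.mem_univ, true_and]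
      refine ⟨hR _ hs, hadj, hu.imp (hL _) ?_⟩
      rintro ⟨w, hw, hne, hwa⟩
      rcases w with w | w
      · exact hwa.elim
      · exact htwo R _ a w (hR _ hs) (hR _ hw) (fun e => hne (by rw [e])) hadj hwa
    · exact hadj.elim
  calc _ ≤ ((X.disjSum Y).image f).card := Finset.card_le_card hsub
    _ ≤ (X.disjSum Y).card := Finset.card_image_le
    _ = X.card + Y.card := Finset.card_disjSum _ _

/-- **Multicolour induced size-Ramsey numbers of paths.**
There is an absolute constant `A > 0` such that for all sufficiently large `k` and all
positive integers `n`, we have `r̂ᵏ_ind(Pₙ) ≤ A n k³ log² k`; i.e. there is a graph `G`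
with at most `A n k³ log² k` edges such that every `k`-colouring of the edges of `G`
contains a monochromatic copy of the path `Pₙ` (with `n` edges) that is induced in `G`. -/
theorem induced_size_ramsey_paths :
    ∃ A : ℝ, 0 < A ∧ ∃ K : ℕ, ∀ k : ℕ, K ≤ k → ∀ n : ℕ, 0 < n →
      ∃ (N : ℕ) (G : SimpleGraph (Fin N)),
        (Nat.card G.edgeSet : ℝ) ≤ A * n * k ^ 3 * Real.log k ^ 2 ∧
        ∀ col : Sym2 (Fin N) → Fin k,
          ∃ p : Fin (n + 1) → Fin N, IsMonoInducedPathSeq G col p := by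
  classical
  refine ⟨2 ^ 40, by norm_num, 2 ^ 26, fun k hk n hn => ?_⟩
  have hk0 : 0 < k := by omega
  have hkr : (2 ^ 26 : ℝ) ≤ k := by exact_mod_cast hk
  have hlog : 1 ≤ Real.log k := by
    rw [Real.le_log_iff_exp_le (by linarith)]
    linarith [Real.exp_one_lt_three]
  set ℓ := ⌈Real.log k⌉₊ with hℓdef
  have hℓ0 : 0 < ℓ := Nat.ceil_pos.2 (by linarith)
  have hℓ2 : (ℓ : ℝ) ≤ 2 * Real.log k := by
    linarith [Nat.ceil_lt_add_one (by linarith : 0 ≤ Real.log k)]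
  have hℓk : ℓ ≤ k := Nat.ceil_le.2 (by linarith [Real.log_le_sub_one_of_pos (by linarith : (0:ℝ) < k)])
  have hkℓ : (k : ℝ) ≤ Real.exp ℓ := by
    rw [← Real.log_le_iff_le_exp (by linarith)]
    exact Nat.le_ceil _
  obtain ⟨r, hr⟩ : ∃ r, r = 2 ^ 14 * n * k := ⟨_, rfl⟩
  obtain ⟨d, hd⟩ : ∃ d, d = 2 ^ 11 * k * ℓ := ⟨_, rfl⟩
  obtain ⟨N, hN⟩ : ∃ N, N = r * d := ⟨_, rfl⟩
  have hr0 : 0 < r := by rw [hr]; positivity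
  have hd0 : 0 < d := by rw [hd]; positivity
  have : NeZero r := ⟨hr0.ne'⟩
  obtain ⟨ω, hup, hlow, hQ₁, hQ₂⟩ := exists_labelling n k ℓ N r d hn hk hℓ0 hℓk hkℓ hr hd hN
  have h2nN : 2 * n ≤ N := by
    have h1 : 2 * n ≤ r := by rw [hr]; nlinarith
    rw [hN]; nlinarith
  have hcard : Fintype.card (Fin N ⊕ Fin N) = N + N := by simp
  have hE := card_edgeFinset_labelGraph ω
  have hpath := exists_monoInducedPath (labelGraph ω) n k (128 * ℓ) hn hk0 (by rw [hcard]; omega)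
    (by
      rw [hE, hcard]
      rw [hd] at hlow
      have e : N * (2 ^ 11 * k * ℓ) = 4 * (k * (2 * (128 * ℓ) * (N + N))) := by ring
      omega)
    (by
      intro Q hQ
      -- both sides of `Q` are padded to sets of size exactly `2 n`
      obtain ⟨L, hL, hLc⟩ := Finset.exists_superset_card_eq (s := Q.toLeft) (n := 2 * n)
        (Finset.card_toLeft_le.trans hQ) (by simpa using h2nN)
      obtain ⟨R, hR, hRc⟩ := Finset.exists_superset_card_eq (s := Q.toRight) (n := 2 * n)
        (Finset.card_toRight_le.trans hQ) (by simpa using h2nN)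
      have h := card_stuckPairs_labelGraph_le ω Q L R
        (fun b hb => hL (Finset.mem_toLeft.2 hb)) (fun a ha => hR (Finset.mem_toRight.2 ha))
      have h1 := hQ₁ R L hRc hLc
      have h2 := hQ₂ L R hLc hRc
      have e : 128 * ℓ * n = 64 * ℓ * n + 64 * ℓ * n := by ring
      convert lt_of_le_of_lt h (e ▸ add_lt_add h1 h2))
  let φ := (labelGraph ω).overFinIso hcard
  refine ⟨N + N, (labelGraph ω).overFin hcard, ?_, ?_⟩
  · rw [← Nat.card_congr φ.mapEdgeSet, Nat.card_eq_fintype_card,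
      ← SimpleGraph.edgeFinset_card, hE]
    have h1 : ((∑ b, hits Finset.univ (ω b) : ℕ) : ℝ) ≤ ((4 * N * d : ℕ) : ℝ) := by
      exact_mod_cast hup
    have h2 : ((4 * N * d : ℕ) : ℝ) = 2 ^ 38 * n * k ^ 3 * ℓ ^ 2 := by
      rw [hN, hr, hd]; push_cast; ring
    have h3 : (ℓ : ℝ) ^ 2 ≤ (2 * Real.log k) ^ 2 := by gcongr
    calc ((∑ b, hits Finset.univ (ω b) : ℕ) : ℝ) ≤ 2 ^ 38 * n * k ^ 3 * ℓ ^ 2 := h1.trans_eq h2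
      _ ≤ 2 ^ 38 * n * k ^ 3 * (2 * Real.log k) ^ 2 := by gcongr
      _ = _ := by ring
  · intro col
    obtain ⟨p, hinj, ⟨c, hc⟩, hind⟩ := hpath (fun e => col (e.map φ))
    refine ⟨fun i => φ (p i), φ.injective.comp hinj, ⟨c, fun i j hij => ?_⟩, fun i j hij => ?_⟩
    · exact ⟨φ.map_adj_iff.2 (hc i j hij).1, by simpa using (hc i j hij).2⟩
    · rw [φ.map_adj_iff]
      exact hind i j hij
end

section
/- Let $G$ be a graph with average degree at least $D > 0$, and let $m$ be a positive integer with $m \le |V(G)|$. Suppose that every set of exactly $m$ vertices of $G$ spans fewer than $mD/2$ edges. Then $G$ contains an induced subgraph on more than $m$ vertices with minimum degree at least $D/2$. -/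
/-!
Call a vertex set `S` dense if it spans at least `|S| * D / 2` edges. The whole vertex set is dense,
so there is a smallest dense set `S` with at least `m` vertices. No `m`-set is dense, so `|S| > m`.
A vertex of `S` with fewer than `D / 2` neighbours in `S` could be deleted, leaving a smaller dense
set with at least `m` vertices; so the minimum degree inside `S` is at least `D / 2`.
The count behind the deletion step is `edgesInside_le_erase`.
-/

/-- `e_G(X)`: the number of edges of `G` with both endpoints in `X`. -/
noncomputable def edgesInside {V : Type*} (G : SimpleGraph V) (X : Finset V) : ℕ :=
  Nat.card {e : Sym2 V // e ∈ G.edgeSet ∧ ∀ v ∈ e, v ∈ X}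

theorem edgesInside_univ {V : Type*} [Fintype V] (G : SimpleGraph V) :
    edgesInside G Finset.univ = Nat.card G.edgeSet := by
  simp [edgesInside]

/-- Deleting a vertex from `S` loses at most as many edges as it has neighbours in `S`. -/
theorem edgesInside_le_erase {V : Type*} [Fintype V] [DecidableEq V] (G : SimpleGraph V)
    [DecidableRel G.Adj] (S : Finset V) (v : V) :
    edgesInside G S ≤ edgesInside G (S.erase v) + (S.filter fun u => G.Adj v u).card := by
  have hsub : {e : Sym2 V | e ∈ G.edgeSet ∧ ∀ w ∈ e, w ∈ S} ⊆
      {e : Sym2 V | e ∈ G.edgeSet ∧ ∀ w ∈ e, w ∈ S.erase v} ∪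
        (((S.filter fun u => G.Adj v u).image fun u => s(v, u) : Finset (Sym2 V)) :
          Set (Sym2 V)) := by
    rintro e ⟨he, hS⟩
    by_cases hv : v ∈ e
    · right
      obtain ⟨u, rfl⟩ := hv
      simp only [Finset.coe_image, Set.mem_image, Finset.mem_coe, Finset.mem_filter]
      exact ⟨u, ⟨hS u (Sym2.mem_mk_right v u), he⟩, rfl⟩
    · left
      exact ⟨he, fun w hw => Finset.mem_erase.2 ⟨fun h => hv (h ▸ hw), hS w hw⟩⟩
  have h1 := Set.ncard_le_ncard hsub (Set.toFinite _)
  have h2 := h1.trans (Set.ncard_union_le _ _)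
  rw [Set.ncard_coe_finset] at h2
  exact h2.trans (Nat.add_le_add_left Finset.card_image_le _)

/-- Let `G` be a graph with average degree at least `D > 0` (i.e. `D·|V(G)| ≤ 2·e(G)`),
and let `m` be a positive integer with `m ≤ |V(G)|`. Suppose every set of exactly `m`
vertices spans fewer than `mD/2` edges. Then `G` contains an induced subgraph on more
than `m` vertices with minimum degree at least `D/2`. -/
theorem induced_subgraph_of_min_degree
    {V : Type*} [Fintype V] [DecidableEq V] (G : SimpleGraph V) [DecidableRel G.Adj]
    (D : ℝ) (hD : 0 < D)
    (havg : D * Fintype.card V ≤ 2 * (Nat.card G.edgeSet : ℝ))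
    (m : ℕ) (hm : 0 < m) (hmV : m ≤ Fintype.card V)
    (hspan : ∀ X : Finset V, X.card = m → (edgesInside G X : ℝ) < m * D / 2) :
    ∃ S : Finset V, m < S.card ∧ ∀ v ∈ S, D / 2 ≤ ((S.filter fun u => G.Adj v u).card : ℝ) := by
  classical
  let dense : Finset (Finset V) :=
    Finset.univ.filter fun S => m ≤ S.card ∧ (S.card : ℝ) * D / 2 ≤ edgesInside G S
  have hne : dense.Nonempty := by
    refine ⟨Finset.univ, Finset.mem_filter.2 ⟨Finset.mem_univ _, by simpa using hmV, ?_⟩⟩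
    rw [edgesInside_univ, Finset.card_univ]
    linarith
  obtain ⟨S, hS, hmin⟩ := Finset.exists_min_image dense Finset.card hne
  obtain ⟨-, hmS, hSd⟩ := Finset.mem_filter.1 hS
  have hlt : m < S.card := by
    refine lt_of_le_of_ne hmS fun h => ?_
    have := hspan S h.symm
    rw [← h] at hSd
    linarith
  refine ⟨S, hlt, fun v hv => ?_⟩
  by_contra! hdeg
  have hcard := Finset.card_erase_add_one hv
  have hcard' : ((S.erase v).card : ℝ) + 1 = S.card := by exact_mod_cast hcard
  have hedge : (edgesInside G S : ℝ) ≤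
      edgesInside G (S.erase v) + ((S.filter fun u => G.Adj v u).card : ℝ) := by
    exact_mod_cast edgesInside_le_erase G S v
  have hmem : S.erase v ∈ dense := by
    refine Finset.mem_filter.2 ⟨Finset.mem_univ _, by omega, ?_⟩
    rw [← hcard'] at hSd
    linarith
  have := hmin _ hmem
  omega
end
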